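/- Let K be a field of characteristic zero and let r_1, ..., r_k be distinct nonzero elements of K. Suppose p = x^{m_0} * prod_{i=1}^k (x - r_i)^{m_i} and q = x^{m_0'} * prod_{i=1}^k (x - r_i)^{m_i'} are polynomials in K[x] with integer exponents m_i >= 1 and m_i' >= 1 for 1 <= i <= k and m_0, m_0' >= 0. If the codegree-j coefficients of p and q are equal for every 1 <= j <= k, then m_i = m_i' for every 1 <= i <= k; if moreover deg p = deg q, then also m_0 = m_0'. (Theorem 1: the multiplicities of the nonzero roots of a monic polynomial with known distinct roots are uniquely determined by its first k proper leading coefficients.) -/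

import Mathlib

open Polynomial Finset

lemma aux_reverse_pow {K : Type*} [Field K] (f : K[X]) (n : ℕ) :
    (f ^ n).reverse = f.reverse ^ n := by
  induction n with
  | zero => simpa using reverse_C (1 : K)
  | succ n ih => rw [pow_succ, reverse_mul_of_domain, ih, pow_succ]

lemma aux_reverse_prod {K ι : Type*} [Field K] (s : Finset ι) (f : ι → K[X]) :
    (∏ i ∈ s, f i).reverse = ∏ i ∈ s, (f i).reverse := by
  classical
  induction s using Finset.induction_on with
  | empty => simpa using reverse_C (1 : K)
  | insert a s ha ih => rw [prod_insert ha, prod_insert ha, reverse_mul_of_domain, ih]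

lemma aux_reverse_lin {K : Type*} [Field K] (a : K) :
    (X - C a : K[X]).reverse = 1 - C a * X := by
  have h := reverse_add_C (X : K[X]) (-a)
  have hX : (X : K[X]).reverse = 1 := by
    have := reverse_mul_X (1 : K[X])
    rw [one_mul] at this
    rw [this]; simpa using reverse_C (1 : K)
  simp only [natDegree_X, pow_one, hX] at h
  rw [sub_eq_add_neg, ← C_neg, h]
  simp [sub_eq_add_neg]

lemma aux_reverse {K : Type*} [Field K] {k : ℕ} (r : Fin k → K) (m : Fin k → ℕ) (m0 : ℕ) :
    (X ^ m0 * ∏ i, (X - C (r i)) ^ m i : K[X]).reverse = ∏ i, (1 - C (r i) * X) ^ m i := by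
  rw [reverse_X_pow_mul, aux_reverse_prod]
  simp only [aux_reverse_pow, aux_reverse_lin]

lemma aux_natDegree {K : Type*} [Field K] {k : ℕ} (r : Fin k → K) (m : Fin k → ℕ) (m0 : ℕ) :
    (X ^ m0 * ∏ i, (X - C (r i)) ^ m i : K[X]).natDegree = m0 + ∑ i, m i := by
  have h : ∀ i ∈ (univ : Finset (Fin k)), ((X - C (r i)) ^ m i).Monic :=
    fun i _ => (monic_X_sub_C _).pow _
  rw [(monic_X_pow m0).natDegree_mul (monic_prod_of_monic _ _ h), natDegree_prod_of_monic _ _ h]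
  simp

lemma aux_coeff {K : Type*} [Field K] {k : ℕ} (r : Fin k → K) (m : Fin k → ℕ) (m0 : ℕ)
    (hm : ∀ i, 1 ≤ m i) (p : K[X]) (hp : p = X ^ m0 * ∏ i, (X - C (r i)) ^ m i)
    (j : ℕ) (hj : j ≤ k) :
    (∏ i, (1 - C (r i) * X) ^ m i : K[X]).coeff j = p.coeff (p.natDegree - j) := by
  rw [← aux_reverse r m m0, ← hp, coeff_reverse, revAt_le]
  rw [hp, aux_natDegree]
  have : ∑ i : Fin k, 1 ≤ ∑ i, m i := sum_le_sum fun i _ => hm i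
  simp at this
  omega

lemma aux_deriv {K : Type*} [Field K] {k : ℕ} (r : Fin k → K) (m : Fin k → ℕ)
    (hm : ∀ i, 1 ≤ m i) :
    (∏ i, (1 - C (r i) * X)) * derivative (∏ i, (1 - C (r i) * X) ^ m i : K[X]) =
    (∏ i, (1 - C (r i) * X) ^ m i : K[X]) *
      ∑ i, C (-(m i * r i)) * ∏ j ∈ univ.erase i, (1 - C (r j) * X) := by
  rw [derivative_prod_finset, mul_sum, mul_sum]
  refine sum_congr rfl fun i _ => ?_
  rw [← mul_prod_erase univ (fun i => (1 - C (r i) * X : K[X])) (mem_univ i),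
    ← mul_prod_erase univ (fun i => (1 - C (r i) * X : K[X]) ^ m i) (mem_univ i)]
  obtain ⟨n, hn⟩ : ∃ n, m i = n + 1 := ⟨m i - 1, by have := hm i; omega⟩
  rw [hn, derivative_pow]
  simp
  ring

/-- Theorem 1: a monic polynomial with known distinct nonzero roots is determined
by its first `k` proper leading coefficients. -/
theorem multiplicities_determined_by_proper_leading_coeffs
    {K : Type*} [Field K] [CharZero K] {k : ℕ}
    (r : Fin k → K) (hr : Function.Injective r) (hr0 : ∀ i, r i ≠ 0)
    (m m' : Fin k → ℕ) (hm : ∀ i, 1 ≤ m i) (hm' : ∀ i, 1 ≤ m' i)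
    (m0 m0' : ℕ)
    (p q : K[X])
    (hp : p = X ^ m0 * ∏ i, (X - C (r i)) ^ m i)
    (hq : q = X ^ m0' * ∏ i, (X - C (r i)) ^ m' i)
    (hcoeff : ∀ j, 1 ≤ j → j ≤ k →
      p.coeff (p.natDegree - j) = q.coeff (q.natDegree - j)) :
    (∀ i, m i = m' i) ∧ (p.natDegree = q.natDegree → m0 = m0') := by
  have key : ∀ i, m i = m' i := by
    have hd1 := aux_deriv r m hm
    have hd2 := aux_deriv r m' hm'
    have hc1 := aux_coeff r m m0 hm p hp
    have hc2 := aux_coeff r m' m0' hm' q hq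
    have hQ0 : (∏ i, (1 - C (r i) * X) ^ m' i : K[X]).coeff 0 = 1 := by
      simp [coeff_zero_eq_eval_zero, eval_prod]
    have hP0 : (∏ i, (1 - C (r i) * X) ^ m i : K[X]).coeff 0 = 1 := by
      simp [coeff_zero_eq_eval_zero, eval_prod]
    set P : K[X] := ∏ i, (1 - C (r i) * X) ^ m i
    set Q : K[X] := ∏ i, (1 - C (r i) * X) ^ m' i
    set D : K[X] := ∏ i, (1 - C (r i) * X)
    set N : K[X] := ∑ i, C (-(m i * r i)) * ∏ j ∈ univ.erase i, (1 - C (r j) * X) with hN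
    set N' : K[X] := ∑ i, C (-(m' i * r i)) * ∏ j ∈ univ.erase i, (1 - C (r j) * X) with hN'
    have hc : ∀ j, j ≤ k → P.coeff j = Q.coeff j := by
      intro j hj
      rcases Nat.eq_zero_or_pos j with rfl | h
      · rw [hP0, hQ0]
      · rw [hc1 j hj, hc2 j hj, hcoeff j h hj]
    have h1 : X ^ k ∣ P - Q := by
      rw [X_pow_dvd_iff]
      intro d hd
      rw [coeff_sub, hc d hd.le, sub_self]
    have h2 : X ^ k ∣ derivative P - derivative Q := by
      rw [X_pow_dvd_iff]
      intro d hd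
      rw [coeff_sub, coeff_derivative, coeff_derivative, hc (d + 1) hd, sub_self]
    have h3 : X ^ k ∣ Q * (N - N') := by
      have : Q * (N - N') = D * (derivative P - derivative Q) - (P - Q) * N := by
        rw [mul_sub D, hd1, hd2]; ring
      rw [this]
      exact dvd_sub (h2.mul_left _) (h1.mul_right _)
    have hcop : IsCoprime (X ^ k : K[X]) Q := by
      apply IsCoprime.pow_left
      rw [Polynomial.irreducible_X.coprime_iff_not_dvd, X_dvd_iff, hQ0]
      exact one_ne_zero
    have h4 : X ^ k ∣ N - N' := hcop.dvd_of_dvd_mul_left h3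
    have hdeg : ∀ w : Fin k → K,
        (∑ i, C (w i) * ∏ j ∈ univ.erase i, (1 - C (r j) * X) : K[X]) ∈ degreeLT K k := by
      intro w
      refine Submodule.sum_mem _ fun i _ => ?_
      rw [mem_degreeLT]
      refine (degree_le_natDegree).trans_lt ?_
      have a1 : (∏ j ∈ univ.erase i, (1 - C (r j) * X) : K[X]).natDegree ≤ k - 1 := by
        refine (natDegree_prod_le _ _).trans ?_
        refine (sum_le_card_nsmul _ _ 1 fun j _ => ?_).trans ?_
        · compute_degree
        · simp
      have a2 := (natDegree_C_mul_le (w i) (∏ j ∈ univ.erase i, (1 - C (r j) * X) : K[X])).trans a1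
      have := i.pos
      exact_mod_cast (by omega : _ < k)
    have h5 : N - N' = 0 := by
      apply eq_zero_of_dvd_of_degree_lt h4
      rw [degree_X_pow, ← mem_degreeLT]
      exact Submodule.sub_mem _ (hdeg _) (hdeg _)
    have hev : ∀ (w : Fin k → K) (i : Fin k),
        (∑ i, C (w i) * ∏ j ∈ univ.erase i, (1 - C (r j) * X) : K[X]).eval (r i)⁻¹ =
        w i * ∏ j ∈ univ.erase i, (1 - r j * (r i)⁻¹) := by
      intro w i
      rw [eval_finsetSum, sum_eq_single i]
      · simp [eval_prod]
      · intro b _ hb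
        rw [eval_mul, eval_prod, prod_eq_zero (i := i), mul_zero]
        · simp [hb.symm]
        · simp [hr0 i]
      · simp
    intro i
    have h6 : N.eval (r i)⁻¹ = N'.eval (r i)⁻¹ := by rw [sub_eq_zero.mp h5]
    rw [hN, hN', hev, hev] at h6
    have h7 : ∏ j ∈ univ.erase i, (1 - r j * (r i)⁻¹) ≠ 0 := by
      rw [prod_ne_zero_iff]
      intro j hj h
      apply (mem_erase.mp hj).1
      apply hr
      have := hr0 i
      field_simp at h
      rw [mul_zero] at h
      exact (sub_eq_zero.mp h).symm
    have h8 := neg_injective (mul_right_cancel₀ h7 h6)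
    exact_mod_cast mul_right_cancel₀ (hr0 i) h8
  refine ⟨key, fun h => ?_⟩
  rw [hp, hq, aux_natDegree, aux_natDegree, funext key] at h
  omega
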